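/- arXiv:1608.04635 — 2 statements merged into one kernel-verified Lean document; each statement's English description precedes it below -/
import Mathlib

section
/- Let k ≥ 1, let c₁, …, c_k be positive reals and let a₁, …, a_k be positive, mutually distinct reals. Define ξ : ℝ → ℝ^{2k} by ξ(t) = (c₁cos(a₁t), c₁sin(a₁t), …, c_k cos(a_k t), c_k sin(a_k t)). Then for every t, det(ξ(t), ξ'(t), …, ξ^{(2k−1)}(t)) = (∏_{i=1}^{k} c_i² a_i) · ∏_{1 ≤ i < j ≤ k} (a_i − a_j)² (a_i + a_j)². In particular ξ is positive locally convex on any interval. -/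
open Set

/-- Determinant of the `m×m` matrix whose `j`-th column is the `j`-th derivative of the
curve `γ : ℝ → ℝ^m` at `t`. -/
noncomputable def detCurve (m : ℕ) (γ : ℝ → Fin m → ℝ) (t : ℝ) : ℝ :=
  (Matrix.of fun i j : Fin m => iteratedDeriv (j : ℕ) γ t i).det

/-- The curve `ξ(t) = (c₁cos(a₁t), c₁sin(a₁t), …, c_k cos(a_k t), c_k sin(a_k t))`
in `ℝ^{2k}`. -/
noncomputable def xiEven (k : ℕ) (c a : Fin k → ℝ) : ℝ → Fin (2 * k) → ℝ :=
  fun t i =>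
    let p : Fin k := ⟨(i : ℕ) / 2, by have := i.isLt; omega⟩
    if (i : ℕ) % 2 = 0 then c p * Real.cos (a p * t) else c p * Real.sin (a p * t)

/-!
Each pair `(c cos (a t), c sin (a t))` solves `f'' = -a² f`, so its derivative of order `s + 2 q` is
`(-a²) ^ q` times its derivative of order `s ∈ {0, 1}`. After grouping the columns by the parity of
the order, and the rows accordingly, the matrix of derivatives is therefore the product of the block
diagonal matrix of the `2 × 2` Wronskians of the pairs, each of determinant `c² a` at every time,
and of two diagonal copies of the Vandermonde matrix of the numbers `-a²`. No sign arises, since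
rows and columns are permuted in the same way.
-/

open scoped Kronecker

theorem sq_mul_mul_sq_pos_iff {R : Type*} [Ring R] [LinearOrder R] [IsStrictOrderedRing R]
    {x y z : R} : 0 < x ^ 2 * y * z ^ 2 ↔ x ≠ 0 ∧ 0 < y ∧ z ≠ 0 := by
  rcases eq_or_ne x 0 with rfl | hx
  · simp
  rcases eq_or_ne z 0 with rfl | hz
  · simp
  · simp [hx, hz, mul_pos_iff_of_pos_right (sq_pos_of_ne_zero hz),
      mul_pos_iff_of_pos_left (sq_pos_of_ne_zero hx)]

section Determinants

variable {R : Type*} [CommRing R]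

theorem det_twisted_kronecker {m o : Type*} [Fintype m] [DecidableEq m] [Fintype o]
    [DecidableEq o] (B : o → Matrix m m R) (V : Matrix o o R) :
    (Matrix.of fun x y : m × o => B x.2 x.1 y.1 * V x.2 y.2).det =
      (∏ p, (B p).det) * V.det ^ Fintype.card m := by
  have factorization : (Matrix.of fun x y : m × o => B x.2 x.1 y.1 * V x.2 y.2) =
      Matrix.blockDiagonal B * ((1 : Matrix m m R) ⊗ₖ V) := by
    ext ⟨s, p⟩ ⟨r, q⟩
    simp [Matrix.mul_apply, Fintype.sum_prod_type, Matrix.blockDiagonal_apply, Matrix.one_apply]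
  rw [factorization, Matrix.det_mul, Matrix.det_blockDiagonal, Matrix.det_kronecker,
    Matrix.det_one, one_pow, one_mul]

theorem det_vandermonde_eq_prod_filter_lt {n : ℕ} (v : Fin n → R) :
    (Matrix.vandermonde v).det =
      ∏ p ∈ Finset.univ.filter (fun p : Fin n × Fin n => p.1 < p.2), (v p.2 - v p.1) := by
  simp only [Matrix.det_vandermonde, Finset.prod_filter, Fintype.prod_prod_type,
    ← Finset.filter_lt_eq_Ioi]

end Determinants

section IteratedDeriv

variable {𝕜 : Type*} [NontriviallyNormedField 𝕜]

theorem iteratedDeriv_pi_apply {ι : Type*} [Fintype ι] {E : ι → Type*}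
    [∀ i, NormedAddCommGroup (E i)] [∀ i, NormedSpace 𝕜 (E i)] {f : 𝕜 → ∀ i, E i} {n : ℕ} {x : 𝕜}
    (hf : ContDiffAt 𝕜 n f x) (i : ι) :
    iteratedDeriv n f x i = iteratedDeriv n (fun y => f y i) x := by
  have h := (ContinuousLinearMap.proj (R := 𝕜) (φ := E) i).iteratedFDeriv_comp_left hf le_rfl
  exact (congrArg (fun L => L fun _ => (1 : 𝕜)) h).symm

theorem iteratedDeriv_add_mul_of_eq_smul {F : Type*} [NormedAddCommGroup F] [NormedSpace 𝕜 F]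
    {f : 𝕜 → F} {m : ℕ} {μ : 𝕜} (hf : iteratedDeriv m f = μ • f) (r q : ℕ) :
    iteratedDeriv (r + m * q) f = μ ^ q • iteratedDeriv r f := by
  induction q with
  | zero => simp
  | succ q ih =>
    calc iteratedDeriv (r + m * (q + 1)) f
        = iteratedDeriv (r + m * q) (iteratedDeriv m f) := by
          simp only [iteratedDeriv_eq_iterate, mul_add_one, ← add_assoc,
            Function.iterate_add_apply]
      _ = μ • iteratedDeriv (r + m * q) f := by
          rw [hf]
          exact funext fun x => iteratedDeriv_const_smul_field μ f
      _ = μ ^ (q + 1) • iteratedDeriv r f := by rw [ih, smul_smul, pow_succ']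

end IteratedDeriv

/-- The enumeration of `Fin m × Fin k` by `k` consecutive blocks of length `m`: the pair `(s, p)`,
standing for the position `s` inside the block `p`, has index `s + m * p`. -/
def blockIndex (m k : ℕ) : Fin m × Fin k ≃ Fin (m * k) :=
  (Equiv.prodComm _ _).trans (finProdFinEquiv.trans (finCongr (mul_comm k m)))

theorem blockIndex_val {m k : ℕ} (x : Fin m × Fin k) :
    (blockIndex m k x : ℕ) = x.1 + m * x.2 := by
  simp [blockIndex]

theorem detCurve_eq_prod_mul_det_vandermonde_pow {m k : ℕ} {γ : ℝ → Fin (m * k) → ℝ}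
    {μ : Fin k → ℝ} (hsmooth : ContDiff ℝ (m * k : ℕ) γ)
    (hγ : ∀ s p, iteratedDeriv m (fun t => γ t (blockIndex m k (s, p))) =
      μ p • fun t => γ t (blockIndex m k (s, p))) (t : ℝ) :
    detCurve (m * k) γ t =
      (∏ p, detCurve m (fun u s => γ u (blockIndex m k (s, p))) t) *
        (Matrix.vandermonde μ).det ^ m := by
  let block (p : Fin k) (u : ℝ) (s : Fin m) : ℝ := γ u (blockIndex m k (s, p))
  have block_smooth (p : Fin k) : ContDiff ℝ (m * k : ℕ) (block p) :=
    contDiff_pi.2 fun s => contDiff_pi.1 hsmooth (blockIndex m k (s, p))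
  have entry (s r : Fin m) (p q : Fin k) :
      iteratedDeriv (blockIndex m k (r, q)) γ t (blockIndex m k (s, p)) =
        iteratedDeriv r (block p) t s * μ p ^ (q : ℕ) := by
    have hrq : (blockIndex m k (r, q) : ℕ) ≤ m * k := (blockIndex m k (r, q)).isLt.le
    have hr : (r : ℕ) ≤ m * k := by
      rw [blockIndex_val] at hrq
      exact (Nat.le_add_right _ _).trans hrq
    rw [iteratedDeriv_pi_apply (hsmooth.contDiffAt.of_le (mod_cast hrq)), blockIndex_val,
      iteratedDeriv_add_mul_of_eq_smul (hγ s p),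
      iteratedDeriv_pi_apply ((block_smooth p).contDiffAt.of_le (mod_cast hr)), Pi.smul_apply,
      smul_eq_mul, mul_comm]
  have twisted : (Matrix.of fun i j : Fin (m * k) => iteratedDeriv j γ t i).submatrix
        (blockIndex m k) (blockIndex m k) =
      Matrix.of fun x y : Fin m × Fin k => (Matrix.of fun s r : Fin m =>
        iteratedDeriv r (block x.2) t s) x.1 y.1 * Matrix.vandermonde μ x.2 y.2 :=
    Matrix.ext fun x y => entry x.1 y.1 x.2 y.2
  rw [detCurve, ← Matrix.det_submatrix_equiv_self (blockIndex m k), twisted,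
    det_twisted_kronecker (fun p => Matrix.of fun s r : Fin m => iteratedDeriv r (block p) t s),
    Fintype.card_fin]
  rfl

/-- Uniform motion on the circle of radius `|c|` with angular velocity `a`. -/
noncomputable def uniformCircle (c a : ℝ) : ℝ → Fin 2 → ℝ :=
  fun t => ![c * Real.cos (a * t), c * Real.sin (a * t)]

theorem contDiff_uniformCircle (c a : ℝ) {n : WithTop ℕ∞} : ContDiff ℝ n (uniformCircle c a) := by
  refine contDiff_pi.2 fun s => ?_
  fin_cases s
  · exact contDiff_const.mul (Real.contDiff_cos.comp (contDiff_const.mul contDiff_id))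
  · exact contDiff_const.mul (Real.contDiff_sin.comp (contDiff_const.mul contDiff_id))

theorem iteratedDeriv_two_uniformCircle_apply (c a : ℝ) (s : Fin 2) :
    iteratedDeriv 2 (fun t => uniformCircle c a t s) =
      (-a ^ 2) • fun t => uniformCircle c a t s := by
  funext t
  fin_cases s
  · simp [uniformCircle, iteratedDeriv_const_mul_field,
      iteratedDeriv_comp_const_mul Real.contDiff_cos, iteratedDeriv_succ,
      mul_left_comm]
  · simp [uniformCircle, iteratedDeriv_const_mul_field,
      iteratedDeriv_comp_const_mul Real.contDiff_sin, iteratedDeriv_succ,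
      mul_left_comm]

theorem hasDerivAt_uniformCircle (c a t : ℝ) :
    HasDerivAt (uniformCircle c a) ![-(c * a * Real.sin (a * t)), c * a * Real.cos (a * t)] t := by
  have hlin : HasDerivAt (fun u => a * u) a t := by simpa using (hasDerivAt_id t).const_mul a
  refine hasDerivAt_pi.2 fun s => ?_
  fin_cases s
  · exact (hlin.cos.const_mul c).congr_deriv (by simp; ring)
  · exact (hlin.sin.const_mul c).congr_deriv (by simp; ring)

theorem detCurve_uniformCircle (c a t : ℝ) :
    detCurve 2 (uniformCircle c a) t = c ^ 2 * a := by
  calc detCurve 2 (uniformCircle c a) t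
      = c * Real.cos (a * t) * (c * a * Real.cos (a * t)) -
          -(c * a * Real.sin (a * t)) * (c * Real.sin (a * t)) := by
        simp [detCurve, Matrix.det_fin_two, (hasDerivAt_uniformCircle c a t).deriv, uniformCircle]
    _ = c ^ 2 * a := by linear_combination c ^ 2 * a * Real.sin_sq_add_cos_sq (a * t)

section XiEven

variable {k : ℕ} (c a : Fin k → ℝ)

theorem xiEven_blockIndex (t : ℝ) (s : Fin 2) (p : Fin k) :
    xiEven k c a t (blockIndex 2 k (s, p)) = uniformCircle (c p) (a p) t s := by
  have hdiv : (s + 2 * p : ℕ) / 2 = p := by omega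
  have hmod : (s + 2 * p : ℕ) % 2 = s := by omega
  simp only [xiEven, blockIndex_val, hdiv, hmod]
  fin_cases s <;> rfl

theorem contDiff_xiEven {n : WithTop ℕ∞} : ContDiff ℝ n (xiEven k c a) := by
  refine contDiff_pi.2 ((blockIndex 2 k).forall_congr_right.1 fun ⟨s, p⟩ => ?_)
  simp only [xiEven_blockIndex]
  exact contDiff_pi.1 (contDiff_uniformCircle (c p) (a p)) s

theorem detCurve_xiEven (t : ℝ) :
    detCurve (2 * k) (xiEven k c a) t =
      (∏ p, c p ^ 2 * a p) * (Matrix.vandermonde fun p => -a p ^ 2).det ^ 2 := by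
  rw [detCurve_eq_prod_mul_det_vandermonde_pow (μ := fun p => -a p ^ 2) (contDiff_xiEven c a)
    fun s p => by simp only [xiEven_blockIndex, iteratedDeriv_two_uniformCircle_apply]]
  simp only [xiEven_blockIndex]
  exact congrArg (· * _) (Finset.prod_congr rfl fun p _ => detCurve_uniformCircle (c p) (a p) t)

end XiEven

theorem xi_even_det_general (k : ℕ) (c a : Fin k → ℝ) :
    (∀ t : ℝ, detCurve (2 * k) (xiEven k c a) t =
      (∏ i, c i ^ 2 * a i) *
        ∏ p ∈ Finset.univ.filter (fun p : Fin k × Fin k => p.1 < p.2),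
          ((a p.1 - a p.2) ^ 2 * (a p.1 + a p.2) ^ 2)) ∧
    (∀ t : ℝ, 0 < detCurve (2 * k) (xiEven k c a) t ↔
      (∀ i, c i ≠ 0) ∧ 0 < ∏ i, a i ∧ Function.Injective fun i => a i ^ 2) := by
  refine ⟨fun t => ?_, fun t => ?_⟩
  · rw [detCurve_xiEven, det_vandermonde_eq_prod_filter_lt, ← Finset.prod_pow]
    congr! 2
    ring
  · have nodes_injective : (Matrix.vandermonde fun p => -a p ^ 2).det ≠ 0 ↔
        Function.Injective fun i => a i ^ 2 :=
      Matrix.det_vandermonde_ne_zero_iff.trans (neg_injective.of_comp_iff _)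
    rw [detCurve_xiEven, Finset.prod_mul_distrib, Finset.prod_pow, sq_mul_mul_sq_pos_iff,
      nodes_injective, Finset.prod_ne_zero_iff]
    simp only [Finset.mem_univ, true_imp_iff]

/-- Determinant formula for the curve `ξ`; in particular `ξ` is positive locally convex. -/
theorem xi_even_det (k : ℕ) (hk : 1 ≤ k) (c a : Fin k → ℝ)
    (hc : ∀ i, 0 < c i) (ha : ∀ i, 0 < a i)
    (hdist : ∀ i j, i ≠ j → a i ≠ a j) :
    (∀ t : ℝ, detCurve (2 * k) (xiEven k c a) t =
      (∏ i, c i ^ 2 * a i) *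
        ∏ p ∈ Finset.univ.filter (fun p : Fin k × Fin k => p.1 < p.2),
          ((a p.1 - a p.2) ^ 2 * (a p.1 + a p.2) ^ 2)) ∧
    (∀ t : ℝ, 0 < detCurve (2 * k) (xiEven k c a) t) := by
  obtain ⟨formula, pos_iff⟩ := xi_even_det_general k c a
  exact ⟨formula, fun t => (pos_iff t).2 ⟨fun i => (hc i).ne', Finset.prod_pos fun i _ => ha i,
    fun i j hij => by_contra fun hne =>
      hdist i j hne ((sq_eq_sq₀ (ha i).le (ha j).le).1 hij)⟩⟩
end

section
/- The curve γ̃ : [0, π/2] → S³ ⊂ ℝ⁴ defined by γ̃(t) = ( (1/4)cos(3t) + (3/4)cos t , (√3/4)sin(3t) + (√3/4)sin t , (√3/4)cos t − (√3/4)cos(3t) , (3/4)sin t − (1/4)sin(3t) ) takes values in the unit sphere of ℝ⁴ and is globally convex: for every nonzero a ∈ ℝ⁴, the function f(t) = ⟨a, γ̃(t)⟩ has at most 3 zeros in (0, π/2) counted with multiplicity. -/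
open Set

/-- Global convexity of a curve in `ℝ^m` on the interval `I`: every hyperplane through the
origin meets it in at most `m - 1` points of the interior of `I`, counted with multiplicity. -/
def GloballyConvex (m : ℕ) (γ : ℝ → Fin m → ℝ) (I : Set ℝ) : Prop :=
  ∀ a : Fin m → ℝ, a ≠ 0 →
    ∀ (N : ℕ) (t : Fin N → ℝ) (k : Fin N → ℕ),
      Function.Injective t → (∀ i, t i ∈ interior I) → (∀ i, 1 ≤ k i) →
      (∀ i : Fin N, ∀ j < k i, iteratedDeriv j (fun s => ∑ x, a x * γ s x) (t i) = 0) →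
      ∑ i, k i ≤ m - 1

/-- The explicit curve `γ̃` on `S³ ⊂ ℝ⁴`. -/
noncomputable def gammaTilde : ℝ → Fin 4 → ℝ :=
  fun t => ![(1/4) * Real.cos (3*t) + (3/4) * Real.cos t,
             (Real.sqrt 3 / 4) * Real.sin (3*t) + (Real.sqrt 3 / 4) * Real.sin t,
             (Real.sqrt 3 / 4) * Real.cos t - (Real.sqrt 3 / 4) * Real.cos (3*t),
             (3/4) * Real.sin t - (1/4) * Real.sin (3*t)]

/-!
Triple-angle formulas turn `γ̃` into the rational normal curve
`(cos³ t, √3 cos² t sin t, √3 cos t sin² t, sin³ t)`. Its squared norm is the binomial expansion of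
`(cos² t + sin² t)³`, and pairing it with a covector `a` gives `cos³ t * P (tan t)` for a nonzero
polynomial `P` of degree at most `3`. On `(-π/2, π/2)` the factor `cos³ t` has no zeros and `tan` is
an injective local diffeomorphism, so zeros of the pairing correspond to roots of `P` with the same
multiplicities.
-/

open Polynomial

section RootMultiplicity

theorem sum_rootMultiplicity_le_natDegree {R : Type*} [CommRing R] [IsDomain R] (p : R[X])
    (S : Finset R) : ∑ x ∈ S, p.rootMultiplicity x ≤ p.natDegree := by
  classical
  calc ∑ x ∈ S, p.rootMultiplicity x
      = ∑ x ∈ S, p.roots.count x := by simp only [count_roots]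
    _ ≤ ∑ x ∈ S ∪ p.roots.toFinset, p.roots.count x :=
        Finset.sum_le_sum_of_subset Finset.subset_union_left
    _ = p.roots.card := Multiset.sum_count_eq_card fun x hx =>
        Finset.mem_union_right S (Multiset.mem_toFinset.2 hx)
    _ ≤ p.natDegree := p.card_roots'

theorem sum_rootMultiplicity_comp_le_natDegree {ι R : Type*} [CommRing R] [IsDomain R] (p : R[X])
    {S : Finset ι} {φ : ι → R} (hφ : InjOn φ S) :
    ∑ t ∈ S, p.rootMultiplicity (φ t) ≤ p.natDegree := by
  classical
  simpa only [Finset.sum_image hφ] using sum_rootMultiplicity_le_natDegree p (S.image φ)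

variable {𝕜 : Type*} [NontriviallyNormedField 𝕜]

theorem analyticAt_polynomial_eval (p : 𝕜[X]) (x : 𝕜) : AnalyticAt 𝕜 (fun y => p.eval y) x :=
  AnalyticOnNhd.eval_polynomial p x (mem_univ x)

theorem analyticOrderAt_polynomial_eval {p : 𝕜[X]} (hp : p ≠ 0) (x : 𝕜) :
    analyticOrderAt (fun y => p.eval y) x = p.rootMultiplicity x := by
  obtain ⟨q, hpq, hq⟩ := p.exists_eq_pow_rootMultiplicity_mul_and_not_dvd hp x
  refine (analyticAt_polynomial_eval p x).analyticOrderAt_eq_natCast.2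
    ⟨fun y => q.eval y, analyticAt_polynomial_eval q x, fun hqx => hq (dvd_iff_isRoot.2 hqx),
      .of_forall fun y => ?_⟩
  simpa only [eval_mul, eval_pow, eval_sub, eval_X, eval_C, smul_eq_mul] using congrArg (eval y) hpq

theorem analyticOrderAt_mul_polynomial_eval_comp [CompleteSpace 𝕜] [CharZero 𝕜] {w φ : 𝕜 → 𝕜}
    {t : 𝕜} {p : 𝕜[X]} (hw : AnalyticAt 𝕜 w t) (hwt : w t ≠ 0) (hφ : AnalyticAt 𝕜 φ t)
    (hφt : deriv φ t ≠ 0) (hp : p ≠ 0) :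
    analyticOrderAt (fun s => w s * p.eval (φ s)) t = p.rootMultiplicity (φ t) :=
  calc analyticOrderAt (fun s => w s * p.eval (φ s)) t
      = analyticOrderAt w t + analyticOrderAt ((fun y => p.eval y) ∘ φ) t :=
        analyticOrderAt_mul hw ((analyticAt_polynomial_eval p (φ t)).comp hφ)
    _ = analyticOrderAt (fun y => p.eval y) (φ t) := by
        rw [hw.analyticOrderAt_eq_zero.2 hwt, zero_add,
          analyticOrderAt_comp_of_deriv_ne_zero hφ hφt]
    _ = p.rootMultiplicity (φ t) := analyticOrderAt_polynomial_eval hp (φ t)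

end RootMultiplicity

namespace GloballyConvex

variable {m : ℕ} {γ : ℝ → Fin m → ℝ} {I J : Set ℝ}

theorem mono (hγ : GloballyConvex m γ J) (hIJ : I ⊆ J) : GloballyConvex m γ I :=
  fun a ha N t k ht htI hk hzero =>
    hγ a ha N t k ht (fun i => interior_mono hIJ (htI i)) hk hzero

theorem of_sum_analyticOrderAt_le (hγ : AnalyticOnNhd ℝ γ (interior I))
    (horder : ∀ a : Fin m → ℝ, a ≠ 0 → ∀ S : Finset ℝ, ↑S ⊆ interior I →
      ∑ t ∈ S, analyticOrderAt (fun s => ∑ x, a x * γ s x) t ≤ ((m - 1 : ℕ) : ℕ∞)) :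
    GloballyConvex m γ I := by
  intro a ha N t k ht htI _ hzero
  have hanalytic (i : Fin N) : AnalyticAt ℝ (fun s => ∑ x, a x * γ s x) (t i) :=
    Finset.univ.analyticAt_fun_sum fun x _ =>
      analyticAt_const.mul (analyticAt_pi_iff.1 (hγ (t i) (htI i)) x)
  have hk (i : Fin N) : (k i : ℕ∞) ≤ analyticOrderAt (fun s => ∑ x, a x * γ s x) (t i) :=
    (natCast_le_analyticOrderAt_iff_iteratedDeriv_eq_zero (hanalytic i)).2 (hzero i)
  have hS : ↑(Finset.univ.map ⟨t, ht⟩) ⊆ interior I := by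
    simpa [range_subset_iff] using htI
  have hsum : ((∑ i, k i : ℕ) : ℕ∞) ≤ ((m - 1 : ℕ) : ℕ∞) :=
    calc ((∑ i, k i : ℕ) : ℕ∞)
        = ∑ i, (k i : ℕ∞) := Nat.cast_sum _ _
      _ ≤ ∑ i, analyticOrderAt (fun s => ∑ x, a x * γ s x) (t i) :=
          Finset.sum_le_sum fun i _ => hk i
      _ = ∑ u ∈ Finset.univ.map ⟨t, ht⟩, analyticOrderAt (fun s => ∑ x, a x * γ s x) u :=
          (Finset.sum_map _ ⟨t, ht⟩ _).symm
      _ ≤ ((m - 1 : ℕ) : ℕ∞) := horder a ha _ hS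
  exact_mod_cast hsum

end GloballyConvex

/-- The rational normal curve of degree `n`, parametrized by the angle. The square roots of the
binomial coefficients are the weights that place it on the unit sphere of `ℝⁿ⁺¹`. -/
noncomputable def rationalNormalCurve (n : ℕ) (t : ℝ) (k : Fin (n + 1)) : ℝ :=
  √(n.choose k) * (Real.cos t ^ (n - k : ℕ) * Real.sin t ^ (k : ℕ))

namespace rationalNormalCurve

theorem sum_sq_eq_one (n : ℕ) (t : ℝ) : ∑ k, rationalNormalCurve n t k ^ 2 = 1 :=
  calc ∑ k, rationalNormalCurve n t k ^ 2
      = ∑ k : Fin (n + 1),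
          (Real.sin t ^ 2) ^ (k : ℕ) * (Real.cos t ^ 2) ^ (n - k : ℕ) * n.choose k := by
        refine Finset.sum_congr rfl fun k _ => ?_
        rw [rationalNormalCurve, mul_pow, Real.sq_sqrt (Nat.cast_nonneg _)]
        ring
    _ = (Real.sin t ^ 2 + Real.cos t ^ 2) ^ n := by
        rw [add_pow, Finset.sum_range]
    _ = 1 := by rw [Real.sin_sq_add_cos_sq, one_pow]

theorem analyticAt (n : ℕ) (t : ℝ) : AnalyticAt ℝ (rationalNormalCurve n) t := by
  refine analyticAt_pi_iff.2 fun k => ?_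
  unfold rationalNormalCurve
  fun_prop

/-- The polynomial in `tan t` obtained by dividing the pairing of the covector `a` with the rational
normal curve by `cos t ^ n`; its roots are the tangents of the zeros `t` of that pairing with
`cos t ≠ 0`. -/
noncomputable def pairingPolynomial {n : ℕ} (a : Fin (n + 1) → ℝ) : ℝ[X] :=
  ofFn (n + 1) fun k => a k * √(n.choose k)

variable {n : ℕ}

theorem natDegree_pairingPolynomial_le (a : Fin (n + 1) → ℝ) :
    (pairingPolynomial a).natDegree ≤ n :=
  Nat.lt_succ_iff.1 (ofFn_natDegree_lt (Nat.succ_pos n) _)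

theorem pairingPolynomial_ne_zero {a : Fin (n + 1) → ℝ} (ha : a ≠ 0) : pairingPolynomial a ≠ 0 := by
  obtain ⟨k, hk⟩ := Function.ne_iff.1 ha
  have hchoose : √(n.choose k : ℝ) ≠ 0 :=
    (Real.sqrt_pos.2 (Nat.cast_pos.2 (Nat.choose_pos k.is_le))).ne'
  intro hzero
  have hcoeff : a k * √(n.choose k) = 0 := by
    rw [← ofFn_coeff_eq_val_of_lt (fun k : Fin (n + 1) => a k * √(n.choose k)) k.isLt]
    exact congrArg (coeff · k) hzero
  exact mul_ne_zero hk hchoose hcoeff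

theorem sum_mul_eq_cos_pow_mul_eval (a : Fin (n + 1) → ℝ) {t : ℝ} (ht : Real.cos t ≠ 0) :
    ∑ k, a k * rationalNormalCurve n t k =
      Real.cos t ^ n * (pairingPolynomial a).eval (Real.tan t) := by
  rw [pairingPolynomial, ofFn_eq_sum_monomial, eval_finsetSum, Finset.mul_sum]
  refine Finset.sum_congr rfl fun k _ => ?_
  have hpow : Real.cos t ^ n * Real.tan t ^ (k : ℕ) =
      Real.cos t ^ (n - k : ℕ) * Real.sin t ^ (k : ℕ) := by
    rw [← pow_sub_mul_pow (Real.cos t) k.is_le, mul_assoc, ← mul_pow, mul_comm (Real.cos t),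
      Real.tan_mul_cos ht]
  rw [eval_monomial, rationalNormalCurve, ← hpow]
  ring

theorem analyticOrderAt_sum_mul {a : Fin (n + 1) → ℝ} (ha : a ≠ 0) {t : ℝ}
    (ht : Real.cos t ≠ 0) :
    analyticOrderAt (fun s => ∑ k, a k * rationalNormalCurve n s k) t =
      (pairingPolynomial a).rootMultiplicity (Real.tan t) := by
  have hpairing : (fun s => ∑ k, a k * rationalNormalCurve n s k) =ᶠ[nhds t]
      fun s => Real.cos s ^ n * (pairingPolynomial a).eval (Real.tan s) := by
    filter_upwards [Real.continuous_cos.continuousAt.eventually_ne ht] with s hs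
    exact sum_mul_eq_cos_pow_mul_eval a hs
  have htan : AnalyticAt ℝ Real.tan t := by
    rw [funext Real.tan_eq_sin_div_cos]
    exact Real.analyticAt_sin.fun_div Real.analyticAt_cos ht
  have htan' : deriv Real.tan t ≠ 0 := by
    rw [Real.deriv_tan]
    exact one_div_ne_zero (pow_ne_zero 2 ht)
  rw [analyticOrderAt_congr hpairing]
  exact analyticOrderAt_mul_polynomial_eval_comp (Real.analyticAt_cos.fun_pow n) (pow_ne_zero n ht)
    htan htan' (pairingPolynomial_ne_zero ha)

theorem globallyConvex (n : ℕ) :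
    GloballyConvex (n + 1) (rationalNormalCurve n) (Icc (-(Real.pi / 2)) (Real.pi / 2)) := by
  refine GloballyConvex.of_sum_analyticOrderAt_le (fun t _ => analyticAt n t) fun a ha S hS => ?_
  rw [interior_Icc] at hS
  have horder (t : ℝ) (ht : t ∈ S) :
      analyticOrderAt (fun s => ∑ k, a k * rationalNormalCurve n s k) t =
        (pairingPolynomial a).rootMultiplicity (Real.tan t) :=
    analyticOrderAt_sum_mul ha (Real.cos_pos_of_mem_Ioo (hS ht)).ne'
  have hroots : ∑ t ∈ S, (pairingPolynomial a).rootMultiplicity (Real.tan t) ≤ n :=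
    (sum_rootMultiplicity_comp_le_natDegree _ (Real.injOn_tan.mono hS)).trans
      (natDegree_pairingPolynomial_le a)
  rw [Finset.sum_congr rfl horder, Nat.add_sub_cancel]
  exact_mod_cast hroots

end rationalNormalCurve

theorem gammaTilde_eq_rationalNormalCurve : gammaTilde = rationalNormalCurve 3 := by
  funext t k
  have hsq := Real.sin_sq_add_cos_sq t
  fin_cases k
  · simp only [gammaTilde, rationalNormalCurve, Real.cos_three_mul, Fin.zero_eta,
      Matrix.cons_val_zero, Nat.choose_zero_right, Nat.cast_one, Real.sqrt_one]
    ring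
  · simp only [gammaTilde, rationalNormalCurve, Real.sin_three_mul, Fin.mk_one,
      Matrix.cons_val_one, Matrix.cons_val_zero, Nat.choose_one_right, Nat.cast_ofNat]
    linear_combination (-(√3 * Real.sin t)) * hsq
  · simp only [gammaTilde, rationalNormalCurve, Real.cos_three_mul, Fin.reduceFinMk,
      Matrix.cons_val, Nat.choose_succ_self_right, Nat.cast_ofNat, Nat.reduceAdd]
    linear_combination (-(√3 * Real.cos t)) * hsq
  · simp only [gammaTilde, rationalNormalCurve, Real.sin_three_mul, Fin.reduceFinMk,
      Matrix.cons_val, Nat.choose_self, Nat.cast_one, Real.sqrt_one]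
    ring

theorem gammaTilde_globally_convex_general :
    (∀ t : ℝ, ∑ x, gammaTilde t x ^ 2 = 1) ∧
    GloballyConvex 4 gammaTilde (Icc (-(Real.pi / 2)) (Real.pi / 2)) := by
  rw [gammaTilde_eq_rationalNormalCurve]
  exact ⟨rationalNormalCurve.sum_sq_eq_one 3, rationalNormalCurve.globallyConvex 3⟩

/-- The curve `γ̃` takes values in the unit sphere of `ℝ⁴` and is globally convex on
`[0, π/2]`: every hyperplane through the origin meets it in at most `3` points of
`(0, π/2)` counted with multiplicity. -/
theorem gammaTilde_globally_convex :
    (∀ t ∈ Icc (0 : ℝ) (Real.pi / 2), ∑ x, gammaTilde t x ^ 2 = 1) ∧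
    GloballyConvex 4 gammaTilde (Icc 0 (Real.pi / 2)) := by
  obtain ⟨hsphere, hconvex⟩ := gammaTilde_globally_convex_general
  exact ⟨fun t _ => hsphere t,
    hconvex.mono (Icc_subset_Icc_left (neg_nonpos.2 Real.pi_div_two_pos.le))⟩
end
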